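/- Let Δ ≥ 3 and let f_{λ,d}(z) = λ/(1+z)^d. Suppose d_1,…,d_n ∈ {1,…,Δ−1} and λ ∈ ℂ are such that (f_{λ,d_n} ∘ ⋯ ∘ f_{λ,d_1})(0) = −1. Then there exists a tree T of maximum degree at most Δ with Z_T(λ) = 0. -/

import Mathlib

open scoped Classical

/-- The independence polynomial of a finite simple graph. -/
noncomputable def Zind {V : Type} [Fintype V] (G : SimpleGraph V) (x : ℂ) : ℂ :=
  ∑ I ∈ Finset.univ.powerset.filter
      (fun I : Finset V => ∀ a ∈ I, ∀ b ∈ I, ¬ G.Adj a b), x ^ I.card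

/-- A set of vertices, given by its indicator function, is independent. -/
def IsIndepIndicator {V : Type} (G : SimpleGraph V) (σ : V → Bool) : Prop :=
  ∀ a b, σ a = true → σ b = true → ¬ G.Adj a b

/-- The part of the independence polynomial coming from the independent sets whose indicator
takes the value `c` at `r`. -/
noncomputable def rootedZ {V : Type} [Fintype V] (G : SimpleGraph V) (r : V) (x : ℂ)
    (c : Bool) : ℂ :=
  ∑ σ : V → Bool, if IsIndepIndicator G σ ∧ σ r = c then ∏ v, (if σ v then x else 1) else 0

theorem rootedZ_eq_sum_equiv {V : Type} [Fintype V] (G : SimpleGraph V) (r : V) (x : ℂ)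
    (c : Bool) {ι : Type} [Fintype ι] (e : (V → Bool) ≃ ι) :
    rootedZ G r x c = ∑ p, if IsIndepIndicator G (e.symm p) ∧ e.symm p r = c then
      ∏ v, (if e.symm p v then x else 1) else 0 :=
  Fintype.sum_equiv e _ _ fun σ => by rw [e.symm_apply_apply]

theorem sum_indicator_eq_rootedZ {V : Type} [Fintype V] (G : SimpleGraph V) (r : V) (x : ℂ) :
    (∑ σ : V → Bool, if IsIndepIndicator G σ then ∏ v, (if σ v then x else 1) else 0) =
      rootedZ G r x false + rootedZ G r x true := by
  unfold rootedZ
  rw [← Finset.sum_add_distrib]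
  refine Finset.sum_congr rfl fun σ _ => ?_
  by_cases h : IsIndepIndicator G σ <;> cases hr : σ r <;> simp [h]

theorem Zind_eq_rootedZ {V : Type} [Fintype V] (G : SimpleGraph V) (r : V) (x : ℂ) :
    Zind G x = rootedZ G r x false + rootedZ G r x true := by
  rw [← sum_indicator_eq_rootedZ, Zind, Finset.sum_filter, Finset.powerset_univ]
  refine Finset.sum_bij' (fun I _ v => decide (v ∈ I))
    (fun σ _ => Finset.univ.filter fun v => σ v = true) (by simp) (by simp) ?_ ?_ ?_
  · intro I _
    ext v
    simp
  · intro σ _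
    ext v
    simp
  · intro I _
    have h : (∀ a ∈ I, ∀ b ∈ I, ¬ G.Adj a b) ↔
        IsIndepIndicator G (fun v => decide (v ∈ I)) := by
      simp only [IsIndepIndicator, decide_eq_true_eq]
      exact ⟨fun h a b ha hb => h a ha b hb, fun h a ha b hb => h a b ha hb⟩
    simp only [← h]
    congr 1
    simp

/-- The adjacency relation of `graft`. -/
def graftAdj {V : Type} (G : SimpleGraph V) (r : V) (k : ℕ) :
    Option (Fin k × V) → Option (Fin k × V) → Prop
  | none, none => False
  | none, some p => p.2 = r
  | some p, none => p.2 = r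
  | some p, some q => p.1 = q.1 ∧ G.Adj p.2 q.2

/-- The graph obtained from `k` disjoint copies of `G` by joining a new vertex to the copies
of `r`. -/
def graft {V : Type} (G : SimpleGraph V) (r : V) (k : ℕ) : SimpleGraph (Option (Fin k × V)) where
  Adj := graftAdj G r k
  symm := ⟨by
    rintro (_ | p) (_ | q) h
    · exact h
    · exact h
    · exact h
    · exact ⟨h.1.symm, h.2.symm⟩⟩
  loopless := ⟨by
    rintro (_ | p) h
    · exact h
    · exact G.loopless.irrefl _ h.2⟩

section graft

variable {V : Type} (G : SimpleGraph V) (r : V) (k : ℕ)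

@[simp] theorem graft_adj_none_none : ¬ (graft G r k).Adj none none := id

@[simp] theorem graft_adj_none_some (p : Fin k × V) :
    (graft G r k).Adj none (some p) ↔ p.2 = r := Iff.rfl

@[simp] theorem graft_adj_some_none (p : Fin k × V) :
    (graft G r k).Adj (some p) none ↔ p.2 = r := Iff.rfl

@[simp] theorem graft_adj_some_some (p q : Fin k × V) :
    (graft G r k).Adj (some p) (some q) ↔ p.1 = q.1 ∧ G.Adj p.2 q.2 := Iff.rfl

theorem graft_connected (hG : G.Connected) : (graft G r k).Connected := by
  have key : ∀ v, (graft G r k).Reachable none v := by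
    rintro (_ | ⟨i, v⟩)
    · exact SimpleGraph.Reachable.refl _
    · let f : G →g graft G r k := ⟨fun v => some (i, v), fun h => ⟨rfl, h⟩⟩
      have h₁ : (graft G r k).Adj none (some (i, r)) := rfl
      exact h₁.reachable.trans ((hG.preconnected r v).map f)
  exact ⟨fun u v => (key u).symm.trans (key v)⟩

theorem isIndepIndicator_graft (σ : Option (Fin k × V) → Bool) :
    IsIndepIndicator (graft G r k) σ ↔
      (∀ i, IsIndepIndicator G fun v => σ (some (i, v))) ∧
        (σ none = true → ∀ i, σ (some (i, r)) = false) := by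
  constructor
  · intro h
    refine ⟨fun i a b ha hb hab => h _ _ ha hb ⟨rfl, hab⟩, fun h0 i => ?_⟩
    by_contra hi
    exact h none (some (i, r)) h0 (by simpa using hi) rfl
  · rintro ⟨h₁, h₂⟩ (_ | ⟨i, a⟩) (_ | ⟨j, b⟩) ha hb hab
    · exact hab
    · obtain rfl : b = r := hab
      simp [h₂ ha j] at hb
    · obtain rfl : a = r := hab
      simp [h₂ hb i] at ha
    · obtain ⟨rfl, hab⟩ : i = j ∧ G.Adj a b := hab
      exact h₁ i a b ha hb hab

variable [Fintype V]

theorem degree_eq_sum_adj (v : V) : G.degree v = ∑ w, if G.Adj v w then 1 else 0 := by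
  rw [← SimpleGraph.card_neighborFinset_eq_degree, SimpleGraph.neighborFinset_eq_filter,
    Finset.card_filter]

theorem graft_degree_none : (graft G r k).degree none = k := by
  rw [degree_eq_sum_adj, Fintype.sum_option, Fintype.sum_prod_type]
  simp

theorem graft_degree_some (p : Fin k × V) :
    (graft G r k).degree (some p) = (if p.2 = r then 1 else 0) + G.degree p.2 := by
  rw [degree_eq_sum_adj, degree_eq_sum_adj, Fintype.sum_option, Fintype.sum_prod_type,
    Finset.sum_eq_single p.1]
  · simp
  · intro i _ hi
    simp [hi.symm]
  · simp

theorem graft_isTree (hG : G.IsTree) : (graft G r k).IsTree := by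
  rw [SimpleGraph.isTree_iff_connected_and_card] at hG ⊢
  refine ⟨graft_connected G r k hG.1, ?_⟩
  have h₁ := hG.2
  have h₂ := G.sum_degrees_eq_twice_card_edges
  have h₃ := (graft G r k).sum_degrees_eq_twice_card_edges
  rw [Fintype.sum_option, Fintype.sum_prod_type] at h₃
  simp only [graft_degree_none, graft_degree_some, Finset.sum_add_distrib, h₂] at h₃
  simp only [Nat.card_eq_fintype_card, ← SimpleGraph.edgeFinset_card, Fintype.card_option,
    Fintype.card_prod, Fintype.card_fin] at h₁ ⊢
  rw [← h₁]
  simp at h₃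
  simp
  linarith

theorem rootedZ_graft (x : ℂ) (c : Bool) :
    rootedZ (graft G r k) none x c = (if c then x else 1) *
      (∑ σ : V → Bool, if IsIndepIndicator G σ ∧ (c = true → σ r = false) then
        ∏ v, (if σ v then x else 1) else 0) ^ k := by
  let e : (Option (Fin k × V) → Bool) ≃ Bool × (Fin k → V → Bool) :=
    (Equiv.piOptionEquivProd).trans ((Equiv.refl Bool).prodCongr (Equiv.curry _ _ _))
  have hpow : ∀ s : ℂ, s ^ k = ∏ _i : Fin k, s := by simp
  rw [rootedZ_eq_sum_equiv _ _ _ _ e, Fintype.sum_prod_type, Finset.sum_eq_single c, hpow, Fintype.prod_sum,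
    Finset.mul_sum]
  · refine Finset.sum_congr rfl fun τ _ => ?_
    have hn : e.symm (c, τ) none = c := rfl
    have hs : ∀ i v, e.symm (c, τ) (some (i, v)) = τ i v := fun _ _ => rfl
    simp only [isIndepIndicator_graft, hn, hs, Fintype.prod_option, Fintype.prod_prod_type,
      and_true]
    by_cases h : ∀ i, IsIndepIndicator G (τ i) ∧ (c = true → τ i r = false)
    · rw [if_pos ⟨fun i => (h i).1, fun hc i => (h i).2 hc⟩]
      exact congrArg _ (Finset.prod_congr rfl fun i _ => (if_pos (h i)).symm)
    · rw [if_neg fun h' => h fun i => ⟨h'.1 i, fun hc => h'.2 hc i⟩]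
      push Not at h
      obtain ⟨i, hi⟩ := h
      rw [Finset.prod_eq_zero (Finset.mem_univ i), mul_zero]
      rw [if_neg]
      rintro ⟨h₁, h₂⟩
      exact (hi h₁).2 (h₂ (hi h₁).1)
  · intro b _ hb
    refine Finset.sum_eq_zero fun τ _ => if_neg fun h => hb h.2
  · simp

theorem rootedZ_graft_false (x : ℂ) :
    rootedZ (graft G r k) none x false = (rootedZ G r x false + rootedZ G r x true) ^ k := by
  rw [rootedZ_graft, ← sum_indicator_eq_rootedZ]
  simp

theorem rootedZ_graft_true (x : ℂ) :
    rootedZ (graft G r k) none x true = x * rootedZ G r x false ^ k := by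
  rw [rootedZ_graft, rootedZ]
  simp

end graft

theorem rootedZ_unit (x : ℂ) (c : Bool) :
    rootedZ (⊥ : SimpleGraph Unit) () x c = if c then x else 1 := by
  rw [rootedZ_eq_sum_equiv _ _ _ _ (Equiv.funUnique Unit Bool)]
  simp [IsIndepIndicator]

/-- A nonempty orbit of `0` avoiding `-1` before its last point is realised by the occupation
ratio at the root of a tree. -/
theorem exists_rooted_tree (Δ : ℕ) (hΔ : 3 ≤ Δ) (n : ℕ) (d : ℕ → ℕ)
    (hd : ∀ i < n + 1, 1 ≤ d i ∧ d i ≤ Δ - 1) (lam : ℂ) (z : ℕ → ℂ)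
    (hz0 : z 0 = 0) (hz : ∀ i < n + 1, z (i + 1) = lam / (1 + z i) ^ d i)
    (hne : ∀ i < n + 1, z i ≠ -1) :
    ∃ (V : Type) (_ : Fintype V) (T : SimpleGraph V) (r : V),
      T.IsTree ∧ (∀ v : V, T.degree v ≤ Δ) ∧ T.degree r ≤ Δ - 1 ∧
        rootedZ T r lam false ≠ 0 ∧
        rootedZ T r lam true = z (n + 1) * rootedZ T r lam false := by
  induction n with
  | zero =>
    refine ⟨Unit, inferInstance, ⊥, (), SimpleGraph.IsTree.of_subsingleton, ?_, ?_, ?_, ?_⟩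
    · simp
    · simp
    · simp [rootedZ_unit]
    · simp [rootedZ_unit, hz, hz0]
  | succ n ih =>
    obtain ⟨V, _, T, r, hT, hdeg, hr, h0, h1⟩ := ih (fun i hi => hd i (by omega))
      (fun i hi => hz i (by omega)) (fun i hi => hne i (by omega))
    have hd' := hd (n + 1) (by omega)
    have hz1 : 1 + z (n + 1) ≠ 0 := fun h =>
      hne (n + 1) (by omega) (by linear_combination h)
    have hsum : rootedZ T r lam false + rootedZ T r lam true =
        (1 + z (n + 1)) * rootedZ T r lam false := by rw [h1]; ring
    refine ⟨_, inferInstance, graft T r (d (n + 1)), none, graft_isTree _ _ _ hT, ?_, ?_, ?_, ?_⟩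
    · rintro (_ | ⟨i, v⟩)
      · rw [graft_degree_none]
        omega
      · rw [graft_degree_some]
        by_cases hv : v = r
        · subst hv
          simp only [if_true]
          omega
        · simpa [hv] using hdeg v
    · rw [graft_degree_none]
      exact hd'.2
    · rw [rootedZ_graft_false, hsum]
      exact pow_ne_zero _ (mul_ne_zero hz1 h0)
    · rw [rootedZ_graft_false, rootedZ_graft_true, hsum, hz (n + 1) (by omega), mul_pow]
      field_simp

/-- If the orbit of `0` under the successive maps `f_{λ,d_i}(z) = λ/(1+z)^{d_i}`,
with all `d_i ∈ {1,…,Δ−1}`, reaches `−1`, then some finite tree of maximum degree at most `Δ`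
has `λ` as a root of its independence polynomial. -/
theorem exists_tree_zero (Δ : ℕ) (hΔ : 3 ≤ Δ) (n : ℕ) (d : ℕ → ℕ)
    (hd : ∀ i < n, 1 ≤ d i ∧ d i ≤ Δ - 1) (lam : ℂ) (z : ℕ → ℂ)
    (hz0 : z 0 = 0) (hz : ∀ i < n, z (i + 1) = lam / (1 + z i) ^ d i)
    (hend : z n = -1) :
    ∃ (V : Type) (_ : Fintype V) (T : SimpleGraph V),
      T.IsTree ∧ (∀ v : V, T.degree v ≤ Δ) ∧ Zind T lam = 0 := by
  have hex : ∃ m, z m = -1 := ⟨n, hend⟩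
  have hle : Nat.find hex ≤ n := Nat.find_min' hex hend
  have hm : z (Nat.find hex) = -1 := Nat.find_spec hex
  have hmin : ∀ i < Nat.find hex, z i ≠ -1 := fun i hi => Nat.find_min hex hi
  generalize Nat.find hex = m at hle hm hmin
  cases m with
  | zero => norm_num [hz0] at hm
  | succ m =>
    obtain ⟨V, hV, T, r, hT, hdeg, -, -, h1⟩ := exists_rooted_tree Δ hΔ m d
      (fun i hi => hd i (by omega)) lam z hz0 (fun i hi => hz i (by omega)) hmin
    refine ⟨V, hV, T, hT, hdeg, ?_⟩
    rw [Zind_eq_rootedZ T r, h1, hm]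
    ring
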